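/- For all l₁, l₂ with √2·a ≤ l₁ ≤ l₂ ≤ √3·a, the volume of {(A,B) ∈ C × C : l₁ ≤ dist(A,B) ≤ l₂} equals a⁶ · ∫_{l₁}^{l₂} P₃(l) dl. That is, on the interval [√2·a, √3·a] the separation of two uniformly random points of C has probability density P₃. -/

import Mathlib

open MeasureTheory Real Set

/-- The cube `[0,a]³` in Euclidean 3-space. -/
def cube (a : ℝ) : Set (EuclideanSpace ℝ (Fin 3)) := {x | ∀ i, x i ∈ Set.Icc 0 a}

/-- The density of separations on the range `√2·a ≤ l ≤ √3·a`. -/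
noncomputable def P₃ (a l : ℝ) : ℝ :=
  l / a ^ 6 *
    (8 * a * (l ^ 2 + a ^ 2) * Real.sqrt (l ^ 2 - 2 * a ^ 2)
      - (l ^ 2 + a ^ 2) * (l ^ 2 + 5 * a ^ 2)
      + 2 * π * a ^ 2 * (3 * l ^ 2 - 4 * a * l + 3 * a ^ 2)
      + 24 * a ^ 3 * l * Real.arccos (a ^ 2 / (l ^ 2 - a ^ 2))
      - 24 * a ^ 2 * (l ^ 2 + a ^ 2) * Real.arccos (a / Real.sqrt (l ^ 2 - a ^ 2)))

/-!
The squared distance between two points of the cube is the sum of three squared coordinate gaps,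
and the squared gap of two points of `[0,a]` has density `f u = a / √u - 1` on `(0, a²)`. The
squared distance therefore has density `f ⋆ (f ⋆ f)`. Since `f ⋆ f` vanishes beyond `2a²`, for
`s ≥ 2a²` the outer convolution only involves `f ⋆ f` on `[s - a², 2a²]`, hence beyond `a²`, where a
single elementary formula `g` holds. The derivative of `g` is algebraic and `g (2a²) = 0`, so one
integration by parts gives the outer convolution in closed form; substituting `s = l²` turns it into
the density of the distance itself.
-/

open scoped ENNReal

theorem map_sub_restrict_prod_restrict {G : Type*} [AddGroup G] [MeasurableSpace G]
    [MeasurableAdd₂ G] [MeasurableNeg G] {μ ν : Measure G} [SFinite μ] [SFinite ν]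
    [μ.IsAddRightInvariant] {s t : Set G} (hs : MeasurableSet s) (ht : MeasurableSet t) :
    ((μ.restrict s).prod (ν.restrict t)).map (fun p : G × G => p.1 - p.2) =
      μ.withDensity fun d => ν ((d + ·) ⁻¹' s ∩ t) := by
  ext E hE
  have hmeas : MeasurableSet ((fun p : G × G => p.1 - p.2) ⁻¹' E ∩ s ×ˢ t) :=
    (hE.preimage (by fun_prop)).inter (hs.prod ht)
  have hslice (d : G) : ν (Prod.mk d ⁻¹' ((fun z : G × G => (z.1 + z.2, z.2)) ⁻¹'
      ((fun p => p.1 - p.2) ⁻¹' E ∩ s ×ˢ t))) =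
      E.indicator (fun d => ν ((d + ·) ⁻¹' s ∩ t)) d := by
    by_cases hd : d ∈ E <;> simp [hd, Set.preimage, Set.inter_def]
  rw [Measure.map_apply (by fun_prop) hE, Measure.prod_restrict,
    Measure.restrict_apply (hE.preimage (by fun_prop)), withDensity_apply _ hE,
    ← (measurePreserving_add_prod μ ν).measure_preimage hmeas.nullMeasurableSet,
    Measure.prod_apply (hmeas.preimage (by fun_prop)), ← lintegral_indicator hE]
  exact lintegral_congr hslice

theorem map_sum_pi_succ {M : Type*} [AddCommMonoid M] [MeasurableSpace M] [MeasurableAdd₂ M]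
    {n : ℕ} (μ : Fin (n + 1) → Measure M) [∀ i, SigmaFinite (μ i)] :
    (Measure.pi μ).map (fun w => ∑ i, w i) =
      μ 0 ∗ (Measure.pi fun i : Fin n => μ i.succ).map (fun w => ∑ i, w i) := by
  have hsplit := measurePreserving_piFinSuccAbove μ 0
  have hsum : (fun w : Fin (n + 1) → M => ∑ i, w i) =
      (fun p : M × (Fin n → M) => p.1 + ∑ i, p.2 i) ∘
        MeasurableEquiv.piFinSuccAbove (fun _ => M) 0 := by
    ext w
    simp [Fin.sum_univ_succ, Fin.tail]
  simp only [Fin.succAbove_zero] at hsplit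
  rw [hsum, ← Measure.map_map (by fun_prop) hsplit.measurable, hsplit.map_eq, Measure.conv,
    ← Measure.map_id (μ := μ 0), Measure.map_prod_map _ _ measurable_id (by fun_prop),
    Measure.map_map (by fun_prop) (by fun_prop), Measure.map_id]
  rfl

theorem map_sum_pi_fin_three {M : Type*} [AddCommMonoid M] [MeasurableSpace M] [MeasurableAdd₂ M]
    (ν : Measure M) [SigmaFinite ν] :
    (Measure.pi fun _ : Fin 3 => ν).map (fun w => ∑ i, w i) = ν ∗ (ν ∗ ν) := by
  simp_rw [map_sum_pi_succ]
  simp [Measure.conv_dirac_zero]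

theorem volume_preimage_add_left_inter_Icc (b c d : ℝ) :
    volume ((d + ·) ⁻¹' Icc b c ∩ Icc b c) = ENNReal.ofReal (c - b - |d|) := by
  rw [preimage_const_add_Icc, Icc_inter_Icc, Real.volume_Icc]
  congr 1
  rcases le_total 0 d with h | h
  · rw [abs_of_nonneg h]; grind
  · rw [abs_of_nonpos h]; grind

theorem lintegral_comp_abs (φ : ℝ → ℝ≥0∞) : ∫⁻ x, φ |x| = 2 * ∫⁻ x in Ioi 0, φ x := by
  have hpos : ∫⁻ x in Ioi 0, φ |x| = ∫⁻ x in Ioi 0, φ x :=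
    setLIntegral_congr_fun measurableSet_Ioi fun x hx => by rw [abs_of_pos hx]
  have hneg : ∫⁻ x in Iio 0, φ |x| = ∫⁻ x in Ioi 0, φ |x| := by
    have := (Measure.measurePreserving_neg (volume : Measure ℝ)).setLIntegral_comp_preimage_emb
      (MeasurableEquiv.neg ℝ).measurableEmbedding (fun x => φ |x|) (Ioi 0)
    simpa using this
  rw [← lintegral_add_compl _ (measurableSet_Ioi (a := (0 : ℝ))), compl_Ioi,
    ← restrict_Iio_eq_restrict_Iic, hneg, hpos, two_mul]

theorem lintegral_image_sq {s : Set ℝ} (hs : MeasurableSet s) (hs₀ : s ⊆ Ici 0) (φ : ℝ → ℝ≥0∞) :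
    ∫⁻ u in (· ^ 2) '' s, φ u = ∫⁻ d in s, ENNReal.ofReal (2 * d) * φ (d ^ 2) :=
  lintegral_image_eq_lintegral_deriv_mul_of_monotoneOn hs
    (fun d _ => by simpa using (hasDerivAt_pow 2 d).hasDerivWithinAt)
    ((pow_left_monotoneOn (n := 2)).mono hs₀) φ

theorem image_sq_Ioi_zero : (fun x : ℝ => x ^ 2) '' Ioi 0 = Ioi 0 := by
  ext u
  constructor
  · rintro ⟨d, hd, rfl⟩
    exact pow_pos (mem_Ioi.1 hd) 2
  · exact fun hu => ⟨√u, Real.sqrt_pos.2 hu, Real.sq_sqrt (le_of_lt hu)⟩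

theorem image_sq_Ioc {x y : ℝ} (hx : 0 ≤ x) (hxy : x ≤ y) :
    (· ^ 2) '' Ioc x y = Ioc (x ^ 2) (y ^ 2) :=
  (continuous_pow 2).continuousOn.image_Ioc_of_strictMonoOn hxy
    ((pow_left_strictMonoOn₀ two_ne_zero).mono fun _ h => hx.trans h.1)

theorem map_sq_withDensity_comp_abs {g : ℝ → ℝ≥0∞} (hg : Measurable g) :
    (volume.withDensity fun x => g |x|).map (· ^ 2) =
      volume.withDensity fun u => ENNReal.ofReal (√u)⁻¹ * g √u := by
  refine Measure.ext_of_lintegral _ fun φ hφ => ?_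
  rw [lintegral_map hφ (by fun_prop),
    lintegral_withDensity_eq_lintegral_mul _ (by fun_prop) (by fun_prop),
    lintegral_withDensity_eq_lintegral_mul _ (by fun_prop) hφ]
  have hsupp : ∫⁻ u, ENNReal.ofReal (√u)⁻¹ * g √u * φ u =
      ∫⁻ u in Ioi 0, ENNReal.ofReal (√u)⁻¹ * g √u * φ u := by
    refine (setLIntegral_eq_of_support_subset fun u hu => ?_).symm
    by_contra h
    exact hu (by simp [Real.sqrt_eq_zero_of_nonpos (not_lt.1 h)])
  calc ∫⁻ x, g |x| * φ (x ^ 2) = ∫⁻ x, g |x| * φ (|x| ^ 2) := by simp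
    _ = 2 * ∫⁻ d in Ioi 0, g d * φ (d ^ 2) := lintegral_comp_abs fun d => g d * φ (d ^ 2)
    _ = ∫⁻ d in Ioi 0, ENNReal.ofReal (2 * d) *
          (ENNReal.ofReal (√(d ^ 2))⁻¹ * g √(d ^ 2) * φ (d ^ 2)) := by
        rw [← lintegral_const_mul _ (by fun_prop)]
        refine setLIntegral_congr_fun measurableSet_Ioi fun d (hd : 0 < d) => ?_
        have hcancel : ENNReal.ofReal (2 * d) * ENNReal.ofReal d⁻¹ = 2 := by
          rw [← ENNReal.ofReal_mul (by positivity), mul_inv_cancel_right₀ hd.ne']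
          simp
        simp only [Real.sqrt_sq hd.le]
        rw [← hcancel]
        ring
    _ = ∫⁻ u, ENNReal.ofReal (√u)⁻¹ * g √u * φ u := by
        rw [hsupp, ← lintegral_image_sq measurableSet_Ioi Ioi_subset_Ici_self
          fun u => ENNReal.ofReal (√u)⁻¹ * g √u * φ u, image_sq_Ioi_zero]

theorem lconvolution_eq_setLIntegral_Ioo {f g : ℝ → ℝ≥0∞} {b c : ℝ}
    (hf : ∀ u, b ≤ u → f u = 0) (hg : ∀ u, c ≤ u → g u = 0) (v : ℝ) :
    (f ⋆ₗ g) v = ∫⁻ u in Ioo (v - c) b, f u * g (v - u) := by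
  simp_rw [lconvolution_def, neg_add_eq_sub]
  refine (setLIntegral_eq_of_support_subset fun u hu => ?_).symm
  obtain ⟨hfu, hgu⟩ := mul_ne_zero_iff.1 hu
  exact ⟨by linarith [lt_of_not_ge fun h => hgu (hg _ h)], lt_of_not_ge fun h => hfu (hf _ h)⟩

theorem le_and_lintegral_Ioo_deriv_eq_ofReal_sub {F F' : ℝ → ℝ} {x y : ℝ} (hxy : x ≤ y)
    (hF : ContinuousOn F (Icc x y)) (hF' : ∀ t ∈ Ioo x y, HasDerivAt F (F' t) t)
    (hpos : ∀ t ∈ Ioo x y, 0 ≤ F' t) :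
    F x ≤ F y ∧ ∫⁻ t in Ioo x y, ENNReal.ofReal (F' t) = ENNReal.ofReal (F y - F x) := by
  have hint : IntegrableOn F' (Ioc x y) := intervalIntegral.integrableOn_deriv_of_nonneg hF hF' hpos
  have hae : 0 ≤ᵐ[volume.restrict (Ioo x y)] F' := ae_restrict_of_forall_mem measurableSet_Ioo hpos
  have hFTC : ∫ t in Ioo x y, F' t = F y - F x := by
    rw [← integral_Ioc_eq_integral_Ioo, ← intervalIntegral.integral_of_le hxy]
    exact intervalIntegral.integral_eq_sub_of_hasDerivAt_of_le hxy hF hF'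
      ((intervalIntegrable_iff_integrableOn_Ioc_of_le hxy).2 hint)
  refine ⟨sub_nonneg.1 (hFTC ▸ integral_nonneg_of_ae hae), ?_⟩
  rw [← hFTC, ofReal_integral_eq_lintegral_ofReal (hint.mono_set Ioo_subset_Ioc_self) hae]

theorem sqrt_mul_sq {x : ℝ} (hx : 0 ≤ x) (y : ℝ) : (√x * y) ^ 2 = x * y ^ 2 := by
  rw [mul_pow, Real.sq_sqrt hx]

theorem sqrt_two_mul_sq_sub_sq {x : ℝ} (hx : 0 ≤ x) : √(2 * x ^ 2 - x ^ 2) = x := by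
  rw [two_mul, add_sub_cancel_right, Real.sqrt_sq hx]

theorem arccos_div_eq_arctan_div {x y h : ℝ} (hx : 0 < x) (hy : 0 ≤ y) (hh : 0 < h)
    (hxy : x ^ 2 + y ^ 2 = h ^ 2) : arccos (x / h) = arctan (y / x) := by
  have hsin : √(1 - (x / h) ^ 2) = y / h := by
    rw [← Real.sqrt_sq (div_nonneg hy hh.le)]
    congr 1
    field_simp
    linarith
  rw [arccos_eq_arctan (by positivity), hsin, div_div_div_cancel_right₀ hh.ne']

theorem arctan_div_eq_pi_div_two_sub {x y : ℝ} (hx : 0 < x) (hy : 0 < y) :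
    arctan (x / y) = π / 2 - arctan (y / x) := by
  rw [← arctan_inv_of_pos (div_pos hy hx), inv_div]

theorem two_mul_arctan_div {x y : ℝ} (hy : 0 < y) (hxy : y < x) :
    2 * arctan (x / y) = π - arctan (2 * x * y / (x ^ 2 - y ^ 2)) := by
  have h : x ^ 2 - y ^ 2 ≠ 0 := by nlinarith
  have h' : y ^ 2 - x ^ 2 ≠ 0 := by nlinarith
  have hdouble : 2 * (x / y) / (1 - (x / y) ^ 2) = -(2 * x * y / (x ^ 2 - y ^ 2)) := by
    field_simp
    ring
  rw [two_mul_arctan_add_pi ((one_lt_div hy).2 hxy), hdouble, arctan_neg]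
  ring

theorem hasDerivAt_sqrt_sub_const {c v : ℝ} (h : v ≠ c) :
    HasDerivAt (fun v => √(v - c)) (1 / (2 * √(v - c))) v :=
  ((hasDerivAt_id' v).sub_const c).sqrt (sub_ne_zero.2 h)

theorem hasDerivAt_sqrt_const_sub {s v : ℝ} (h : s ≠ v) :
    HasDerivAt (fun v => √(s - v)) (-1 / (2 * √(s - v))) v :=
  ((hasDerivAt_id' v).const_sub s).sqrt (sub_ne_zero.2 h)

theorem hasDerivAt_arctan_mul_sqrt_div_sqrt (κ : ℝ) {c s v : ℝ} (hc : c < v) (hs : v < s) :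
    HasDerivAt (fun v => arctan (κ * (√(v - c) / √(s - v))))
      (κ * (s - c) / (2 * √(v - c) * √(s - v) * ((s - v) + κ ^ 2 * (v - c)))) v := by
  have hp : 0 < √(v - c) := Real.sqrt_pos.2 (sub_pos.2 hc)
  have hq : 0 < √(s - v) := Real.sqrt_pos.2 (sub_pos.2 hs)
  have hp2 : √(v - c) ^ 2 = v - c := Real.sq_sqrt (sub_pos.2 hc).le
  have hq2 : √(s - v) ^ 2 = s - v := Real.sq_sqrt (sub_pos.2 hs).le
  refine (((hasDerivAt_sqrt_sub_const hc.ne').div (hasDerivAt_sqrt_const_sub hs.ne')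
    hq.ne').const_mul κ).arctan.congr_deriv ?_
  rw [show s - c = √(s - v) ^ 2 + √(v - c) ^ 2 by rw [hp2, hq2]; ring, ← hp2, ← hq2]
  simp only [Real.sqrt_sq hp.le, Real.sqrt_sq hq.le, Pi.div_apply]
  generalize √(v - c) = p at *
  generalize √(s - v) = q at *
  have : q ^ 2 + κ ^ 2 * p ^ 2 ≠ 0 := by positivity
  field_simp
  ring

theorem hasDerivAt_arctan_sqrt_div_sqrt {c s v : ℝ} (hc : c < v) (hs : v < s) :
    HasDerivAt (fun v => arctan (√(v - c) / √(s - v))) (1 / (2 * √(v - c) * √(s - v))) v := by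
  have h := hasDerivAt_arctan_mul_sqrt_div_sqrt 1 hc hs
  simp only [one_mul] at h
  refine h.congr_deriv ?_
  have : s - c ≠ 0 := by linarith
  rw [show s - v + 1 ^ 2 * (v - c) = s - c by ring]
  field_simp

/-! ### Squared distances as sums of squared gaps -/

/-- The law of the squared gap `(x - y) ^ 2` between two independent points of law `μ`. -/
noncomputable def gapSqLaw (μ : Measure ℝ) : Measure ℝ :=
  (μ.prod μ).map fun p => (p.1 - p.2) ^ 2

/-- The density of the squared gap `(x - y) ^ 2` under Lebesgue measure on `[0,a]²`, not normalized.
It vanishes outside `(0, a ^ 2)` without a cutoff: `a / √u` is `a / 0 = 0` for `u ≤ 0`, and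
`ENNReal.ofReal` truncates the nonpositive values taken for `u ≥ a ^ 2`. -/
noncomputable def gapSqDensity (a u : ℝ) : ℝ≥0∞ := ENNReal.ofReal (a / √u - 1)

theorem measurable_gapSqDensity (a : ℝ) : Measurable (gapSqDensity a) := by
  unfold gapSqDensity
  fun_prop

theorem gapSqLaw_restrict_Icc (a : ℝ) :
    gapSqLaw (volume.restrict (Icc 0 a)) = volume.withDensity (gapSqDensity a) := by
  have hdiff : ((volume.restrict (Icc 0 a)).prod (volume.restrict (Icc 0 a))).map
      (fun p : ℝ × ℝ => p.1 - p.2) = volume.withDensity fun d => ENNReal.ofReal (a - |d|) := by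
    simp_rw [map_sub_restrict_prod_restrict measurableSet_Icc measurableSet_Icc,
      volume_preimage_add_left_inter_Icc, sub_zero]
  have hsq : (fun p : ℝ × ℝ => (p.1 - p.2) ^ 2) = (· ^ 2) ∘ fun p => p.1 - p.2 := rfl
  rw [gapSqLaw, hsq, ← Measure.map_map (by fun_prop) (by fun_prop), hdiff,
    map_sq_withDensity_comp_abs (g := fun d => ENNReal.ofReal (a - d)) (by fun_prop)]
  congr 1
  ext u
  rw [gapSqDensity, ← ENNReal.ofReal_mul (by positivity)]
  rcases eq_or_ne √u 0 with hu | hu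
  · simp [hu]
  · field_simp

theorem one_le_div_sqrt {a u : ℝ} (ha : 0 ≤ a) (hu : 0 < u) (hua : u ≤ a ^ 2) : 1 ≤ a / √u :=
  (one_le_div (Real.sqrt_pos.2 hu)).2 ((Real.sqrt_le_left ha).2 hua)

theorem gapSqDensity_eq_zero {a u : ℝ} (hu : a ^ 2 ≤ u) : gapSqDensity a u = 0 :=
  ENNReal.ofReal_of_nonpos <| sub_nonpos.2 <|
    div_le_one_of_le₀ (Real.le_sqrt_of_sq_le hu) (Real.sqrt_nonneg u)

theorem map_dist_sq_prod_map_toLp {ι : Type*} [Fintype ι] (μ : ι → Measure ℝ)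
    [∀ i, IsFiniteMeasure (μ i)] :
    (((Measure.pi μ).map (WithLp.toLp 2)).prod ((Measure.pi μ).map (WithLp.toLp 2))).map
        (fun p : EuclideanSpace ℝ ι × EuclideanSpace ℝ ι => dist p.1 p.2 ^ 2) =
      (Measure.pi fun i => gapSqLaw (μ i)).map fun w => ∑ i, w i := by
  have hgap := Measure.pi_map_pi (μ := fun i => (μ i).prod (μ i))
    (f := fun _ (p : ℝ × ℝ) => (p.1 - p.2) ^ 2) (fun i => by fun_prop)
  have hsplit := measurePreserving_arrowProdEquivProdArrow ℝ ℝ ι μ μ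
  simp only [gapSqLaw]
  rw [← hgap, Measure.map_prod_map _ _ (by fun_prop) (by fun_prop), ← hsplit.map_eq,
    Measure.map_map (by fun_prop) (by fun_prop), Measure.map_map (by fun_prop) (by fun_prop),
    Measure.map_map (by fun_prop) (by fun_prop)]
  congr 1
  ext q
  simp only [Function.comp_apply, EuclideanSpace.dist_sq_eq, Real.dist_eq, sq_abs]
  rfl

theorem restrict_volume_pi_eq_map_toLp {ι : Type*} [Fintype ι] (s : ι → Set ℝ) :
    (volume : Measure (EuclideanSpace ℝ ι)).restrict {x | ∀ i, x i ∈ s i} =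
      (Measure.pi fun i => volume.restrict (s i)).map (WithLp.toLp 2) := by
  have h := (PiLp.volume_preserving_toLp ι).restrict_preimage_emb
    (MeasurableEquiv.toLp 2 (ι → ℝ)).measurableEmbedding {x | ∀ i, x i ∈ s i}
  rw [← h.map_eq, ← Measure.restrict_pi_pi, ← volume_pi]
  congr 2
  ext x
  simp

theorem map_dist_sq_restrict_cube (a : ℝ) :
    ((volume.restrict (cube a)).prod (volume.restrict (cube a))).map
        (fun p : EuclideanSpace ℝ (Fin 3) × EuclideanSpace ℝ (Fin 3) => dist p.1 p.2 ^ 2) =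
      volume.withDensity (gapSqDensity a ⋆ₗ (gapSqDensity a ⋆ₗ gapSqDensity a)) := by
  have hf := measurable_gapSqDensity a
  have : IsFiniteMeasure (volume.withDensity (gapSqDensity a)) := by
    rw [← gapSqLaw_restrict_Icc, gapSqLaw]
    infer_instance
  rw [cube, restrict_volume_pi_eq_map_toLp (fun _ => Icc 0 a), map_dist_sq_prod_map_toLp,
    gapSqLaw_restrict_Icc, map_sum_pi_fin_three, conv_withDensity_eq_lconvolution hf hf,
    conv_withDensity_eq_lconvolution hf (measurable_lconvolution _ hf hf)]

theorem volume_cube_dist_mem_Icc (a : ℝ) {l₁ l₂ : ℝ} (hl₁ : 0 ≤ l₁) (hl : l₁ ≤ l₂) :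
    volume {p : EuclideanSpace ℝ (Fin 3) × EuclideanSpace ℝ (Fin 3) |
        p.1 ∈ cube a ∧ p.2 ∈ cube a ∧ l₁ ≤ dist p.1 p.2 ∧ dist p.1 p.2 ≤ l₂} =
      ∫⁻ l in Ioc l₁ l₂, ENNReal.ofReal (2 * l) *
        (gapSqDensity a ⋆ₗ (gapSqDensity a ⋆ₗ gapSqDensity a)) (l ^ 2) := by
  have hset : {p : EuclideanSpace ℝ (Fin 3) × EuclideanSpace ℝ (Fin 3) |
      p.1 ∈ cube a ∧ p.2 ∈ cube a ∧ l₁ ≤ dist p.1 p.2 ∧ dist p.1 p.2 ≤ l₂} =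
      (fun p => dist p.1 p.2 ^ 2) ⁻¹' Icc (l₁ ^ 2) (l₂ ^ 2) ∩ cube a ×ˢ cube a := by
    ext p
    simp only [mem_ofPred_eq, mem_inter_iff, mem_preimage, mem_Icc, mem_prod,
      pow_le_pow_iff_left₀ hl₁ dist_nonneg two_ne_zero,
      pow_le_pow_iff_left₀ dist_nonneg (hl₁.trans hl) two_ne_zero]
    tauto
  rw [hset, ← Measure.restrict_apply (measurableSet_Icc.preimage (by fun_prop)),
    Measure.volume_eq_prod, ← Measure.prod_restrict,
    ← Measure.map_apply (by fun_prop) measurableSet_Icc, map_dist_sq_restrict_cube,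
    withDensity_apply _ measurableSet_Icc, setLIntegral_congr Ioc_ae_eq_Icc.symm,
    ← image_sq_Ioc hl₁ hl, lintegral_image_sq measurableSet_Ioc
      fun l hl => hl₁.trans hl.1.le]

/-! ### Closed forms of the convolutions -/

/-- The density, at `v` between `a ^ 2` and `2 * a ^ 2`, of the squared distance between two points
of the square `[0,a]²`, not normalized. -/
noncomputable def squareDistSqDensity (a v : ℝ) : ℝ :=
  π * a ^ 2 - 2 * a ^ 2 - v + 4 * a * √(v - a ^ 2) - 4 * a ^ 2 * arctan (√(v - a ^ 2) / a)

/-- A primitive in `u` of `(a / √u - 1) * (a / √(v - u) - 1)`. -/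
noncomputable def squarePrimitive (a v u : ℝ) : ℝ :=
  2 * a ^ 2 * arctan (√u / √(v - u)) - 2 * a * √u + 2 * a * √(v - u) + u

theorem hasDerivAt_squarePrimitive (a : ℝ) {v u : ℝ} (hu : 0 < u) (huv : u < v) :
    HasDerivAt (squarePrimitive a v) ((a / √u - 1) * (a / √(v - u) - 1)) u := by
  have hp := hasDerivAt_sqrt hu.ne'
  have hq := hasDerivAt_sqrt_const_sub huv.ne'
  have hθ := hasDerivAt_arctan_sqrt_div_sqrt hu huv
  simp only [sub_zero] at hθ
  have hp0 : √u ≠ 0 := (Real.sqrt_pos.2 hu).ne'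
  have hq0 : √(v - u) ≠ 0 := (Real.sqrt_pos.2 (sub_pos.2 huv)).ne'
  refine ((((hθ.const_mul (2 * a ^ 2)).sub (hp.const_mul (2 * a))).add
    (hq.const_mul (2 * a))).add (hasDerivAt_id u)).congr_deriv ?_
  field_simp
  ring

theorem squarePrimitive_sub {a v : ℝ} (ha : 0 < a) (hv : a ^ 2 < v) :
    squarePrimitive a v (a ^ 2) - squarePrimitive a v (v - a ^ 2) = squareDistSqDensity a v := by
  have hp : 0 < √(v - a ^ 2) := Real.sqrt_pos.2 (sub_pos.2 hv)
  simp only [squarePrimitive, squareDistSqDensity, sub_sub_cancel, Real.sqrt_sq ha.le,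
    arctan_div_eq_pi_div_two_sub ha hp]
  ring

theorem hasDerivAt_squareDistSqDensity {a v : ℝ} (ha : 0 < a) (hv : a ^ 2 < v) :
    HasDerivAt (squareDistSqDensity a) (2 * a * √(v - a ^ 2) / v - 1) v := by
  have hp := hasDerivAt_sqrt_sub_const hv.ne'
  have hp0 : 0 < √(v - a ^ 2) := Real.sqrt_pos.2 (sub_pos.2 hv)
  have hp2 : v = √(v - a ^ 2) ^ 2 + a ^ 2 := by rw [Real.sq_sqrt (sub_pos.2 hv).le]; ring
  refine ((((hasDerivAt_id v).const_sub (π * a ^ 2 - 2 * a ^ 2)).add (hp.const_mul (4 * a))).sub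
    ((hp.div_const a).arctan.const_mul (4 * a ^ 2))).congr_deriv ?_
  generalize √(v - a ^ 2) = p at *
  subst hp2
  field_simp
  ring

theorem squareDistSqDensity_two_mul_sq {a : ℝ} (ha : 0 < a) :
    squareDistSqDensity a (2 * a ^ 2) = 0 := by
  rw [squareDistSqDensity, sqrt_two_mul_sq_sub_sq ha.le, div_self ha.ne', arctan_one]
  ring

/-- A primitive in `v` of `squareDistSqDensity a v * (a / √(l ^ 2 - v) - 1)`, obtained by parts: the
first term is the boundary term, and the others integrate
`(2 * a * √(v - a ^ 2) / v - 1) * (2 * a * √(l ^ 2 - v) + v)`. -/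
noncomputable def cubePrimitive (a l v : ℝ) : ℝ :=
  -squareDistSqDensity a v * (2 * a * √(l ^ 2 - v) + v)
    + 4 * a ^ 2 * (√(v - a ^ 2) * √(l ^ 2 - v)
      + (l ^ 2 + a ^ 2) * arctan (√(v - a ^ 2) / √(l ^ 2 - v))
      - 2 * a * l * arctan (l / a * (√(v - a ^ 2) / √(l ^ 2 - v))))
    + 4 * a / 3 * (√(v - a ^ 2) ^ 3 + √(l ^ 2 - v) ^ 3) - v ^ 2 / 2

theorem hasDerivAt_primitive_sqrt_mul_sqrt_div {a l v : ℝ} (ha : 0 < a) (hv : a ^ 2 < v)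
    (hvl : v < l ^ 2) :
    HasDerivAt (fun v => √(v - a ^ 2) * √(l ^ 2 - v)
        + (l ^ 2 + a ^ 2) * arctan (√(v - a ^ 2) / √(l ^ 2 - v))
        - 2 * a * l * arctan (l / a * (√(v - a ^ 2) / √(l ^ 2 - v))))
      (√(v - a ^ 2) * √(l ^ 2 - v) / v) v := by
  have hv0 : 0 < v := (sq_nonneg a).trans_lt hv
  have hp0 : 0 < √(v - a ^ 2) := Real.sqrt_pos.2 (sub_pos.2 hv)
  have hq0 : 0 < √(l ^ 2 - v) := Real.sqrt_pos.2 (sub_pos.2 hvl)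
  have hp2 : √(v - a ^ 2) ^ 2 = v - a ^ 2 := Real.sq_sqrt (sub_pos.2 hv).le
  have hq2 : √(l ^ 2 - v) ^ 2 = l ^ 2 - v := Real.sq_sqrt (sub_pos.2 hvl).le
  have hdenom : l ^ 2 - v + (l / a) ^ 2 * (v - a ^ 2) = v * (l ^ 2 - a ^ 2) / a ^ 2 := by
    field_simp
    ring
  refine ((((hasDerivAt_sqrt_sub_const hv.ne').mul (hasDerivAt_sqrt_const_sub hvl.ne')).add
    ((hasDerivAt_arctan_sqrt_div_sqrt hv hvl).const_mul (l ^ 2 + a ^ 2))).sub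
    ((hasDerivAt_arctan_mul_sqrt_div_sqrt (l / a) hv hvl).const_mul (2 * a * l))).congr_deriv ?_
  have hla : l ^ 2 - a ^ 2 ≠ 0 := by linarith
  rw [hdenom]
  field_simp
  rw [hp2, hq2]
  ring

theorem hasDerivAt_cubePrimitive {a l v : ℝ} (ha : 0 < a) (hv : a ^ 2 < v)
    (hvl : v < l ^ 2) :
    HasDerivAt (cubePrimitive a l) (squareDistSqDensity a v * (a / √(l ^ 2 - v) - 1)) v := by
  have hv0 : v ≠ 0 := ((sq_nonneg a).trans_lt hv).ne'
  have hp0 : √(v - a ^ 2) ≠ 0 := (Real.sqrt_pos.2 (sub_pos.2 hv)).ne'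
  have hq0 : √(l ^ 2 - v) ≠ 0 := (Real.sqrt_pos.2 (sub_pos.2 hvl)).ne'
  have hp := hasDerivAt_sqrt_sub_const hv.ne'
  have hq := hasDerivAt_sqrt_const_sub hvl.ne'
  refine (((((hasDerivAt_squareDistSqDensity ha hv).neg.mul
    ((hq.const_mul (2 * a)).add (hasDerivAt_id v))).add
    ((hasDerivAt_primitive_sqrt_mul_sqrt_div ha hv hvl).const_mul (4 * a ^ 2))).add
    (((hp.pow 3).add (hq.pow 3)).const_mul (4 * a / 3))).sub
    (((hasDerivAt_id v).pow 2).div_const 2)).congr_deriv ?_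
  simp only [Pi.neg_apply, Pi.add_apply, id]
  field_simp
  ring

theorem two_mul_mul_cubePrimitive_sub {a l : ℝ} (ha : 0 < a) (hl : 0 < l)
    (hal : 2 * a ^ 2 < l ^ 2) :
    2 * l * (cubePrimitive a l (2 * a ^ 2) - cubePrimitive a l (l ^ 2 - a ^ 2)) =
      a ^ 6 * P₃ a l := by
  set n := √(l ^ 2 - 2 * a ^ 2) with hn
  have hn0 : 0 < n := Real.sqrt_pos.2 (sub_pos.2 hal)
  have hn2 : n ^ 2 = l ^ 2 - 2 * a ^ 2 := Real.sq_sqrt (sub_pos.2 hal).le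
  have ha2 : 0 < a ^ 2 := by positivity
  have hp : √(l ^ 2 - a ^ 2 - a ^ 2) = n := by rw [hn]; ring_nf
  have hq : √(l ^ 2 - (l ^ 2 - a ^ 2)) = a := by rw [sub_sub_cancel, Real.sqrt_sq ha.le]
  have harccos_a : arccos (a / √(l ^ 2 - a ^ 2)) = arctan (n / a) :=
    arccos_div_eq_arctan_div ha hn0.le (Real.sqrt_pos.2 (by linarith))
      (by rw [hn2, Real.sq_sqrt (by linarith)]; ring)
  have harccos_a_sq : arccos (a ^ 2 / (l ^ 2 - a ^ 2)) = arctan (l * n / a ^ 2) :=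
    arccos_div_eq_arctan_div ha2 (by positivity) (by linarith) (by rw [mul_pow, hn2]; ring)
  have hcompl : arctan (a / n) = π / 2 - arctan (n / a) := arctan_div_eq_pi_div_two_sub ha hn0
  have hdouble : 2 * arctan (l / n) = π - arctan (l * n / a ^ 2) := by
    rw [two_mul_arctan_div hn0 (by nlinarith), hn2]
    congr 2
    field_simp
    ring
  have hratio : l / a * (a / n) = l / n := by field_simp
  have hratio' : l / a * (n / a) = l * n / a ^ 2 := by field_simp
  have hdouble' : arctan (l / n) = (π - arctan (l * n / a ^ 2)) / 2 := by linarith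
  rw [cubePrimitive, cubePrimitive, squareDistSqDensity_two_mul_sq ha, squareDistSqDensity,
    sqrt_two_mul_sq_sub_sq ha.le, hp, hq, ← hn, hratio, hratio', hcompl, hdouble', P₃,
    harccos_a, harccos_a_sq, ← hn]
  field_simp
  ring

theorem lconvolution_gapSqDensity_self_eq_zero {a v : ℝ} (hv : 2 * a ^ 2 ≤ v) :
    (gapSqDensity a ⋆ₗ gapSqDensity a) v = 0 := by
  rw [lconvolution_eq_setLIntegral_Ioo (fun _ => gapSqDensity_eq_zero)
    (fun _ => gapSqDensity_eq_zero), Ioo_eq_empty (by linarith), setLIntegral_empty]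

theorem squareDistSqDensity_nonneg_and_lconvolution_eq {a v : ℝ} (ha : 0 < a) (hv : a ^ 2 < v)
    (hva : v ≤ 2 * a ^ 2) :
    0 ≤ squareDistSqDensity a v ∧
      (gapSqDensity a ⋆ₗ gapSqDensity a) v = ENNReal.ofReal (squareDistSqDensity a v) := by
  have hfactor {u : ℝ} (hu : u ∈ Ioo (v - a ^ 2) (a ^ 2)) :
      0 ≤ a / √u - 1 ∧ 0 ≤ a / √(v - u) - 1 :=
    ⟨sub_nonneg.2 (one_le_div_sqrt ha.le (by linarith [hu.1]) hu.2.le),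
      sub_nonneg.2 (one_le_div_sqrt ha.le (by linarith [hu.2]) (by linarith [hu.1]))⟩
  have hderiv (u : ℝ) (hu : u ∈ Icc (v - a ^ 2) (a ^ 2)) :
      HasDerivAt (squarePrimitive a v) ((a / √u - 1) * (a / √(v - u) - 1)) u :=
    hasDerivAt_squarePrimitive a (by linarith [hu.1]) (by linarith [hu.2])
  have hFTC := le_and_lintegral_Ioo_deriv_eq_ofReal_sub (by linarith)
    (HasDerivAt.continuousOn hderiv)
    (fun u hu => hderiv u (Ioo_subset_Icc_self hu))
    (fun u hu => mul_nonneg (hfactor hu).1 (hfactor hu).2)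
  rw [squarePrimitive_sub ha hv] at hFTC
  refine ⟨by linarith [hFTC.1, squarePrimitive_sub ha hv], ?_⟩
  rw [← hFTC.2, lconvolution_eq_setLIntegral_Ioo (fun _ => gapSqDensity_eq_zero)
    (fun _ => gapSqDensity_eq_zero)]
  exact setLIntegral_congr_fun measurableSet_Ioo fun u hu =>
    (ENNReal.ofReal_mul (hfactor hu).1).symm

theorem pow_mul_P₃_nonneg_and_lconvolution_eq {a l : ℝ} (ha : 0 < a) (hl : 0 < l)
    (hal : 2 * a ^ 2 < l ^ 2) (hla : l ^ 2 ≤ 3 * a ^ 2) :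
    0 ≤ a ^ 6 * P₃ a l ∧
      ENNReal.ofReal (2 * l) *
        (gapSqDensity a ⋆ₗ (gapSqDensity a ⋆ₗ gapSqDensity a)) (l ^ 2) =
          ENNReal.ofReal (a ^ 6 * P₃ a l) := by
  have hsquare {v : ℝ} (hv : v ∈ Ioo (l ^ 2 - a ^ 2) (2 * a ^ 2)) :=
    squareDistSqDensity_nonneg_and_lconvolution_eq ha (by linarith [hv.1]) hv.2.le
  have hderiv (v : ℝ) (hv : v ∈ Icc (l ^ 2 - a ^ 2) (2 * a ^ 2)) :
      HasDerivAt (cubePrimitive a l) (squareDistSqDensity a v * (a / √(l ^ 2 - v) - 1)) v :=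
    hasDerivAt_cubePrimitive ha (by linarith [hv.1]) (by linarith [hv.2])
  have hFTC := le_and_lintegral_Ioo_deriv_eq_ofReal_sub (by linarith)
    (HasDerivAt.continuousOn hderiv)
    (fun v hv => hderiv v (Ioo_subset_Icc_self hv))
    (fun v hv => mul_nonneg (hsquare hv).1 (sub_nonneg.2
      (one_le_div_sqrt ha.le (by linarith [hv.2]) (by linarith [hv.1]))))
  rw [← two_mul_mul_cubePrimitive_sub ha hl hal]
  refine ⟨mul_nonneg (by positivity) (sub_nonneg.2 hFTC.1), ?_⟩
  rw [ENNReal.ofReal_mul (p := 2 * l) (by positivity), ← hFTC.2, lconvolution_comm,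
    lconvolution_eq_setLIntegral_Ioo (fun _ => lconvolution_gapSqDensity_self_eq_zero)
      (fun _ => gapSqDensity_eq_zero)]
  congr 1
  refine setLIntegral_congr_fun measurableSet_Ioo fun v hv => ?_
  rw [ENNReal.ofReal_mul (hsquare hv).1, ← (hsquare hv).2, gapSqDensity]

theorem continuousOn_P₃ (a : ℝ) : ContinuousOn (P₃ a) {l | a ^ 2 < l ^ 2} := by
  have h (l : ℝ) (hl : l ∈ {l | a ^ 2 < l ^ 2}) : l ^ 2 - a ^ 2 ≠ 0 := (sub_pos.2 hl).ne'
  have h' (l : ℝ) (hl : l ∈ {l | a ^ 2 < l ^ 2}) : √(l ^ 2 - a ^ 2) ≠ 0 :=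
    (Real.sqrt_pos.2 (sub_pos.2 hl)).ne'
  unfold P₃
  fun_prop (disch := assumption)

theorem density_on_third_range (a : ℝ) (ha : 0 < a) (l₁ l₂ : ℝ)
    (h0 : Real.sqrt 2 * a ≤ l₁) (h12 : l₁ ≤ l₂) (h2a : l₂ ≤ Real.sqrt 3 * a) :
    volume {p : EuclideanSpace ℝ (Fin 3) × EuclideanSpace ℝ (Fin 3) |
        p.1 ∈ cube a ∧ p.2 ∈ cube a ∧ l₁ ≤ dist p.1 p.2 ∧ dist p.1 p.2 ≤ l₂} =
      ENNReal.ofReal (a ^ 6 * ∫ l in l₁..l₂, P₃ a l) := by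
  have hal₁ : a < l₁ :=
    (lt_mul_of_one_lt_left ha (Real.lt_sqrt_of_sq_lt (by norm_num))).trans_le h0
  have hl₁ : 0 < l₁ := ha.trans hal₁
  have hlow {l : ℝ} (hl : l ∈ Ioc l₁ l₂) : 2 * a ^ 2 < l ^ 2 :=
    sqrt_mul_sq zero_le_two a ▸ pow_lt_pow_left₀ (h0.trans_lt hl.1) (by positivity) two_ne_zero
  have hhigh {l : ℝ} (hl : l ∈ Ioc l₁ l₂) : l ^ 2 ≤ 3 * a ^ 2 :=
    sqrt_mul_sq zero_le_three a ▸ pow_le_pow_left₀ (hl₁.trans hl.1).le (hl.2.trans h2a) 2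
  have hdensity {l : ℝ} (hl : l ∈ Ioc l₁ l₂) :=
    pow_mul_P₃_nonneg_and_lconvolution_eq ha (hl₁.trans hl.1) (hlow hl) (hhigh hl)
  have hcont : ContinuousOn (P₃ a) (Icc l₁ l₂) := (continuousOn_P₃ a).mono fun l hl =>
    pow_lt_pow_left₀ (hal₁.trans_le hl.1) ha.le two_ne_zero
  rw [volume_cube_dist_mem_Icc a hl₁.le h12,
    setLIntegral_congr_fun measurableSet_Ioc fun l hl => (hdensity hl).2,
    ← intervalIntegral.integral_const_mul, intervalIntegral.integral_of_le h12,
    ofReal_integral_eq_lintegral_ofReal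
      ((hcont.integrableOn_Icc.mono_set Ioc_subset_Icc_self).const_mul _)
      (ae_restrict_of_forall_mem measurableSet_Ioc fun l hl => (hdensity hl).1)]
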